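/- Let W_3 be the 4×4 matrix with rows (3,3,1,−1), (3,−1,1,3), (1,1,3,1), (−1,−1,1,−1), and let Z_{w,3} = Σ_{i,j} [W_3]_{ij} Π_i⊗Π_j (first Bell projector on qubits A'B', second on A''B''). Then Z_{w,3} is an entanglement witness for the partition A=(A',A''), B=(B',B''): tr(Z_{w,3} ρ) ≥ 0 for every 16×16 matrix ρ that is separable across this partition. -/

import Mathlib

open Matrix Complex
open scoped Kronecker ComplexOrder

noncomputable section
namespace Paper

abbrev Q2 := Fin 2 × Fin 2
abbrev M4 := Matrix Q2 Q2 ℂ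
abbrev M16 := Matrix (Q2 × Q2) (Q2 × Q2) ℂ

/-- `1/√2` as a complex number. -/
def invSqrt2 : ℂ := ((Real.sqrt 2)⁻¹ : ℝ)

/-- The four Bell states `|Φ₁⟩,…,|Φ₄⟩` as vectors in `ℂ²⊗ℂ²`
(product basis indexed by `Fin 2 × Fin 2`). -/
def bell : Fin 4 → Q2 → ℂ :=
  ![fun p => !![invSqrt2, 0; 0, invSqrt2] p.1 p.2,
    fun p => !![invSqrt2, 0; 0, -invSqrt2] p.1 p.2,
    fun p => !![0, invSqrt2; invSqrt2, 0] p.1 p.2,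
    fun p => !![0, invSqrt2; -invSqrt2, 0] p.1 p.2]

/-- The Bell projectors `Π_i = |Φ_i⟩⟨Φ_i|`. -/
def BellProj (i : Fin 4) : M4 := vecMulVec (bell i) (star (bell i))

/-- The Pauli matrices `σ_x, σ_y, σ_z`. -/
def pauli : Fin 3 → Matrix (Fin 2) (Fin 2) ℂ :=
  ![!![0, 1; 1, 0], !![0, -I; I, 0], !![1, 0; 0, -1]]

/-- Reindexing `((a',b'),(a'',b'')) ↦ ((a',a''),(b',b''))`. -/
def swapMid : (Q2 × Q2) ≃ (Q2 × Q2) where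
  toFun p := ((p.1.1, p.2.1), (p.1.2, p.2.2))
  invFun p := ((p.1.1, p.2.1), (p.1.2, p.2.2))
  left_inv _ := rfl
  right_inv _ := rfl

/-- The rank-one matrix `x x†`. -/
def pureMat {d : Type*} (x : d → ℂ) : Matrix d d ℂ := vecMulVec x (star x)

/-- Separability of a 16×16 four-qubit matrix (qubit order A',B',A'',B'')
across the partition A = (A',A''), B = (B',B''). -/
def SepAB (ρ : M16) : Prop :=
  ∃ (n : ℕ) (x y : Fin n → Q2 → ℂ),
    (Matrix.reindex swapMid swapMid ρ) = ∑ k, (pureMat (x k)) ⊗ₖ (pureMat (y k))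


/-- The witness matrix `W3`. -/
def W3 : Matrix (Fin 4) (Fin 4) ℝ :=
  !![3, 3, 1, -1; 3, -1, 1, 3; 1, 1, 3, 1; -1, -1, 1, -1]

/-!
Put `σ₀ = 1`. Each Bell projector is `Π_i = ¼ ∑ μ, ± σ_μ ⊗ σ_μ`, so after regrouping the qubits
`∑ W_ij Π_i ⊗ Π_j` becomes `∑ c_t P_t ⊗ P_t`, summed over the sixteen Pauli strings
`P_t = σ_μ ⊗ σ_ν` of one party, and on a product vector `x ⊗ y` its value is
`∑ c_t ⟨P_t⟩_x ⟨P_t⟩_y`. For `W3` the identity has coefficient `1`, the five mutually anticommuting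
strings `1σ_y, 1σ_z, σ_xσ_x, σ_yσ_x, σ_zσ_x` have coefficient `0`, and the other ten have `±½`.

The squares of all sixteen expectation values in `x` add up to `4‖x‖⁴`, because `∑ P_t ⊗ P_t` is
four times the swap operator. The five anticommuting strings are the coordinates of the Hopf map
`S⁷ → S⁴`, so their squares add up to `‖x‖⁴`. This leaves `4 - 1 - 1 = 2` times `‖x‖⁴` for the ten,
and by Cauchy–Schwarz they contribute at least `-½ · 2‖x‖²‖y‖²`, which the identity term
compensates.
-/

section Expectation

variable {d e ι : Type*} [Fintype d] [Fintype e] [Fintype ι]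

/-- The unnormalised expectation value `⟨x|A|x⟩`. Only its real part is recorded, which loses
nothing when `A` is Hermitian (`ofReal_expectation`). -/
def expectation (A : Matrix d d ℂ) (x : d → ℂ) : ℝ := (star x ⬝ᵥ A *ᵥ x).re

lemma ofReal_expectation {A : Matrix d d ℂ} (hA : A.IsHermitian) (x : d → ℂ) :
    (expectation A x : ℂ) = star x ⬝ᵥ A *ᵥ x :=
  Complex.ext rfl (hA.im_star_dotProduct_mulVec_self x).symm

lemma expectation_one_nonneg [DecidableEq d] (x : d → ℂ) : 0 ≤ expectation 1 x := by
  rw [expectation, one_mulVec]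
  exact (Complex.nonneg_iff.mp (dotProduct_star_self_nonneg x)).1

lemma trace_mul_pureMat (A : Matrix d d ℂ) (x : d → ℂ) :
    (A * pureMat x).trace = star x ⬝ᵥ A *ᵥ x := by
  rw [pureMat, mul_vecMulVec, trace_vecMulVec, dotProduct_comm]

lemma trace_kronecker_mul_pureMat {A : Matrix d d ℂ} {B : Matrix e e ℂ} (hA : A.IsHermitian)
    (hB : B.IsHermitian) (x : d → ℂ) (y : e → ℂ) :
    ((A ⊗ₖ B) * (pureMat x ⊗ₖ pureMat y)).trace = (expectation A x * expectation B y : ℝ) := by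
  rw [← mul_kronecker_mul, trace_kronecker, trace_mul_pureMat, trace_mul_pureMat, ofReal_mul,
    ofReal_expectation hA, ofReal_expectation hB]

-- The completeness hypothesis says that `∑ P t ⊗ P t` is `κ` times the swap operator, and the
-- swap operator fixes `x ⊗ x`.
lemma sum_expectation_sq_of_complete [DecidableEq d] {P : ι → Matrix d d ℂ}
    (hP : ∀ t, (P t).IsHermitian) {κ : ℝ}
    (complete : ∀ a b a' b', ∑ t, P t a b * P t a' b' = if a = b' ∧ b = a' then (κ : ℂ) else 0)
    (x : d → ℂ) : ∑ t, expectation (P t) x ^ 2 = κ * expectation 1 x ^ 2 := by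
  let z (p : d × d) : ℂ := star (x p.1) * x p.2
  have quadForm_eq (t : ι) : star x ⬝ᵥ P t *ᵥ x = ∑ p : d × d, P t p.1 p.2 * z p := by
    simp only [dotProduct, mulVec, Finset.mul_sum, Fintype.sum_prod_type, Pi.star_apply,
      mul_left_comm, z]
  apply Complex.ofReal_injective
  push_cast
  simp only [ofReal_expectation (hP _), ofReal_expectation isHermitian_one, one_mulVec]
  calc ∑ t, (star x ⬝ᵥ P t *ᵥ x) ^ 2
      = ∑ t, ∑ p : d × d, ∑ q : d × d, P t p.1 p.2 * P t q.1 q.2 * (z p * z q) := by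
        simp only [quadForm_eq, sq, Fintype.sum_mul_sum, mul_mul_mul_comm]
    _ = ∑ p : d × d, ∑ q : d × d, (∑ t, P t p.1 p.2 * P t q.1 q.2) * (z p * z q) := by
        rw [Finset.sum_comm]
        refine Fintype.sum_congr _ _ fun p => ?_
        rw [Finset.sum_comm]
        simp only [Finset.sum_mul]
    _ = ∑ p : d × d, κ * (z p * z p.swap) := by
        refine Fintype.sum_congr _ _ fun p => ?_
        rw [Fintype.sum_eq_single p.swap]
        · simp [complete]
        · rintro ⟨a', b'⟩ hq
          rw [complete, if_neg (fun h => hq (Prod.ext h.2.symm h.1.symm)), zero_mul]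
    _ = κ * (star x ⬝ᵥ x) ^ 2 := by
        rw [← Finset.mul_sum, sq, dotProduct, Fintype.sum_mul_sum, Fintype.sum_prod_type]
        refine congrArg _ <| Fintype.sum_congr _ _ fun a => Fintype.sum_congr _ _ fun b => ?_
        simp only [z, Prod.swap, Pi.star_apply]
        ring

end Expectation

section Components

variable {d e : Type*} [Fintype d] [Fintype e]

/-- The component `x_b` in the decomposition `x = ∑ b, x_b ⊗ |b⟩`. -/
def component (x : d × e → ℂ) (b : e) : d → ℂ := fun a => x (a, b)

lemma star_dotProduct_kronecker_mulVec (A : Matrix d d ℂ) (B : Matrix e e ℂ) (x : d × e → ℂ) :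
    star x ⬝ᵥ (A ⊗ₖ B) *ᵥ x =
      ∑ b, ∑ b', B b b' * (star (component x b) ⬝ᵥ A *ᵥ component x b') := by
  simp only [component, dotProduct, mulVec, kroneckerMap_apply, Finset.mul_sum,
    Fintype.sum_prod_type, Pi.star_apply]
  rw [Finset.sum_comm]
  refine Fintype.sum_congr _ _ fun b => ?_
  rw [Finset.sum_comm (γ := e)]
  refine Fintype.sum_congr _ _ fun a => ?_
  rw [Finset.sum_comm]
  refine Fintype.sum_congr _ _ fun b' => Fintype.sum_congr _ _ fun a' => ?_
  ring

lemma star_dotProduct_mulVec_comm {A : Matrix d d ℂ} (hA : A.IsHermitian) (u v : d → ℂ) :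
    star v ⬝ᵥ A *ᵥ u = star (star u ⬝ᵥ A *ᵥ v) := by
  rw [star_dotProduct, star_mulVec, hA.eq, ← dotProduct_mulVec]

lemma expectation_one_eq_add [DecidableEq d] (x : d × Fin 2 → ℂ) :
    expectation 1 x = expectation 1 (component x 0) + expectation 1 (component x 1) := by
  rw [← one_kronecker_one, expectation, star_dotProduct_kronecker_mulVec]
  simp [expectation]

lemma expectation_kronecker_sigmaX {A : Matrix d d ℂ} (hA : A.IsHermitian)
    (x : d × Fin 2 → ℂ) : expectation (A ⊗ₖ pauli 0) x =
      2 * (star (component x 0) ⬝ᵥ A *ᵥ component x 1).re := by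
  rw [expectation, star_dotProduct_kronecker_mulVec, Fin.sum_univ_two, Fin.sum_univ_two,
    Fin.sum_univ_two, star_dotProduct_mulVec_comm hA (component x 0) (component x 1)]
  simp [pauli, two_mul]

lemma expectation_kronecker_sigmaY {A : Matrix d d ℂ} (hA : A.IsHermitian)
    (x : d × Fin 2 → ℂ) : expectation (A ⊗ₖ pauli 1) x =
      2 * (star (component x 0) ⬝ᵥ A *ᵥ component x 1).im := by
  rw [expectation, star_dotProduct_kronecker_mulVec, Fin.sum_univ_two, Fin.sum_univ_two,
    Fin.sum_univ_two, star_dotProduct_mulVec_comm hA (component x 0) (component x 1)]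
  simp [pauli, two_mul]

lemma expectation_kronecker_sigmaZ (A : Matrix d d ℂ) (x : d × Fin 2 → ℂ) :
    expectation (A ⊗ₖ pauli 2) x =
      expectation A (component x 0) - expectation A (component x 1) := by
  rw [expectation, star_dotProduct_kronecker_mulVec]
  simp [pauli, expectation, sub_eq_add_neg]

end Components

lemma abs_sum_mul_mul_le {ι : Type*} {s : Finset ι} {c u v : ι → ℝ} {r a b : ℝ}
    (hc : ∀ t ∈ s, |c t| ≤ r) (hr : 0 ≤ r) (ha : 0 ≤ a) (hb : 0 ≤ b)
    (hu : ∑ t ∈ s, u t ^ 2 ≤ a ^ 2) (hv : ∑ t ∈ s, v t ^ 2 ≤ b ^ 2) :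
    |∑ t ∈ s, c t * (u t * v t)| ≤ r * (a * b) := by
  calc |∑ t ∈ s, c t * (u t * v t)|
      ≤ ∑ t ∈ s, |c t * (u t * v t)| := Finset.abs_sum_le_sum_abs _ _
    _ ≤ ∑ t ∈ s, r * (|u t| * |v t|) := by
        gcongr with t ht
        rw [abs_mul, abs_mul]
        gcongr
        exact hc t ht
    _ = r * ∑ t ∈ s, |u t| * |v t| := (Finset.mul_sum ..).symm
    _ ≤ r * (√(∑ t ∈ s, |u t| ^ 2) * √(∑ t ∈ s, |v t| ^ 2)) := by
        gcongr
        exact Real.sum_mul_le_sqrt_mul_sqrt s _ _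
    _ ≤ r * (a * b) := by
        simp only [sq_abs]
        gcongr
        · exact Real.sqrt_le_iff.mpr ⟨ha, hu⟩
        · exact Real.sqrt_le_iff.mpr ⟨hb, hv⟩

/-- The Hermitian basis `1, σ_x, σ_y, σ_z` of the 2×2 matrices. -/
def pauliBasis : Fin 4 → Matrix (Fin 2) (Fin 2) ℂ := vecCons 1 pauli

/-- The Pauli string `σ_μ ⊗ σ_ν` with `t = (μ, ν)`, acting on the two qubits of one party
(`A'A''` or `B'B''`). -/
def pauliString (t : Fin 4 × Fin 4) : M4 := pauliBasis t.1 ⊗ₖ pauliBasis t.2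

lemma isHermitian_pauli (k : Fin 3) : (pauli k).IsHermitian := by
  ext a b
  fin_cases k <;> fin_cases a <;> fin_cases b <;> simp [pauli]

lemma isHermitian_pauliBasis (μ : Fin 4) : (pauliBasis μ).IsHermitian :=
  Fin.cases isHermitian_one isHermitian_pauli μ

lemma isHermitian_pauliString (t : Fin 4 × Fin 4) : (pauliString t).IsHermitian := by
  rw [IsHermitian, pauliString, conjTranspose_kronecker, isHermitian_pauliBasis,
    isHermitian_pauliBasis]

lemma pauliString_zero : pauliString (0, 0) = 1 := one_kronecker_one

lemma sum_pauliBasis_apply_mul_apply (a b a' b' : Fin 2) :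
    ∑ μ, pauliBasis μ a b * pauliBasis μ a' b' = if a = b' ∧ b = a' then 2 else 0 := by
  fin_cases a <;> fin_cases b <;> fin_cases a' <;> fin_cases b' <;>
    simp [Fin.sum_univ_four, pauliBasis, pauli, one_add_one_eq_two]

lemma sum_pauliString_apply_mul_apply (p q p' q' : Q2) :
    ∑ t, pauliString t p q * pauliString t p' q' = if p = q' ∧ q = p' then 4 else 0 := by
  calc ∑ t, pauliString t p q * pauliString t p' q'
      = (∑ μ, pauliBasis μ p.1 q.1 * pauliBasis μ p'.1 q'.1) *
          ∑ ν, pauliBasis ν p.2 q.2 * pauliBasis ν p'.2 q'.2 := by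
        rw [Fintype.sum_mul_sum, Fintype.sum_prod_type]
        exact Fintype.sum_congr _ _ fun μ => Fintype.sum_congr _ _ fun ν =>
          mul_mul_mul_comm ..
    _ = if p = q' ∧ q = p' then 4 else 0 := by
        rw [sum_pauliBasis_apply_mul_apply, sum_pauliBasis_apply_mul_apply, ite_zero_mul_ite_zero]
        simp only [Prod.ext_iff, and_and_and_comm]
        norm_num

lemma sum_expectation_pauliString_sq (x : Q2 → ℂ) :
    ∑ t, expectation (pauliString t) x ^ 2 = 4 * expectation 1 x ^ 2 :=
  sum_expectation_sq_of_complete isHermitian_pauliString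
    (by simpa using sum_pauliString_apply_mul_apply) x

/-- The five mutually anticommuting strings `1σ_y, 1σ_z, σ_xσ_x, σ_yσ_x, σ_zσ_x`, whose
expectation values are the coordinates of the Hopf map `S⁷ → S⁴`. -/
def hopfStrings : Finset (Fin 4 × Fin 4) := {(0, 2), (0, 3), (1, 1), (2, 1), (3, 1)}

-- `i v, σ_x v, σ_y v, σ_z v` is an orthogonal frame of `ℂ² ≅ ℝ⁴`, each vector as long as `v`.
lemma im_sq_add_sum_pauli_re_sq (u v : Fin 2 → ℂ) :
    (star u ⬝ᵥ v).im ^ 2 + ∑ k, (star u ⬝ᵥ pauli k *ᵥ v).re ^ 2 =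
      expectation 1 u * expectation 1 v := by
  simp [expectation, pauli, dotProduct, mulVec, Fin.sum_univ_three]
  ring

lemma sum_hopfStrings_expectation_sq (x : Q2 → ℂ) :
    ∑ t ∈ hopfStrings, expectation (pauliString t) x ^ 2 = expectation 1 x ^ 2 := by
  have sum_eq : ∑ t ∈ hopfStrings, expectation (pauliString t) x ^ 2 =
      expectation (1 ⊗ₖ pauli 1) x ^ 2 + expectation (1 ⊗ₖ pauli 2) x ^ 2 +
        ∑ k, expectation (pauli k ⊗ₖ pauli 0) x ^ 2 := by
    simp [hopfStrings, Fin.sum_univ_three, add_assoc, pauliString, pauliBasis]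
  rw [sum_eq, expectation_kronecker_sigmaY isHermitian_one, expectation_kronecker_sigmaZ,
    expectation_one_eq_add, one_mulVec]
  simp only [expectation_kronecker_sigmaX (isHermitian_pauli _), mul_pow, ← Finset.mul_sum]
  linear_combination 4 * im_sq_add_sum_pauli_re_sq (component x 0) (component x 1)

/-- The ten Pauli strings that are neither the identity nor in `hopfStrings`. Up to signs they are
the products `i P_s P_t` of two distinct strings in `hopfStrings`, that is, generators of
`so(5)`. -/
def generatorStrings : Finset (Fin 4 × Fin 4) := (insert (0, 0) hopfStrings)ᶜ

lemma sum_univ_eq_add_hopfStrings_add_generatorStrings (f : Fin 4 × Fin 4 → ℝ) :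
    ∑ t, f t = f (0, 0) + ∑ t ∈ hopfStrings, f t + ∑ t ∈ generatorStrings, f t := by
  rw [← Finset.sum_insert (by decide), generatorStrings, Finset.sum_add_sum_compl]

lemma sum_generatorStrings_expectation_sq (x : Q2 → ℂ) :
    ∑ t ∈ generatorStrings, expectation (pauliString t) x ^ 2 = 2 * expectation 1 x ^ 2 := by
  have total := sum_expectation_pauliString_sq x
  rw [sum_univ_eq_add_hopfStrings_add_generatorStrings, sum_hopfStrings_expectation_sq,
    pauliString_zero] at total
  linarith

lemma sum_mul_expectation_pauliString_nonneg {c : Fin 4 × Fin 4 → ℝ} (hc₀ : 0 ≤ c (0, 0))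
    (hopf : ∀ t ∈ hopfStrings, c t = 0) (gen : ∀ t ∈ generatorStrings, |c t| ≤ c (0, 0) / 2)
    (x y : Q2 → ℂ) :
    0 ≤ ∑ t, c t * (expectation (pauliString t) x * expectation (pauliString t) y) := by
  have sum_sq_le (z : Q2 → ℂ) : ∑ t ∈ generatorStrings, expectation (pauliString t) z ^ 2 ≤
      (√2 * expectation 1 z) ^ 2 := by
    rw [sum_generatorStrings_expectation_sq, mul_pow, Real.sq_sqrt zero_le_two]
  have cauchy := abs_sum_mul_mul_le gen (by positivity)
    (mul_nonneg (by positivity) (expectation_one_nonneg x))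
    (mul_nonneg (by positivity) (expectation_one_nonneg y)) (sum_sq_le x) (sum_sq_le y)
  have hopf_sum : ∑ t ∈ hopfStrings,
      c t * (expectation (pauliString t) x * expectation (pauliString t) y) = 0 :=
    Finset.sum_eq_zero fun t ht => by rw [hopf t ht, zero_mul]
  rw [sum_univ_eq_add_hopfStrings_add_generatorStrings, hopf_sum, pauliString_zero]
  rw [mul_mul_mul_comm, Real.mul_self_sqrt zero_le_two] at cauchy
  linarith [neg_le_of_abs_le cauchy]

/-- The signs `⟨Φ_i| σ_μ ⊗ σ_μ |Φ_i⟩`, with rows indexed by Bell states and columns by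
`1, σ_x, σ_y, σ_z`. -/
def bellSign : Matrix (Fin 4) (Fin 4) ℝ :=
  !![1, 1, -1, 1; 1, -1, 1, 1; 1, 1, 1, -1; 1, -1, -1, -1]

lemma invSqrt2_mul_self : invSqrt2 * invSqrt2 = 1 / 2 := by
  rw [invSqrt2, ← ofReal_mul, ← mul_inv, Real.mul_self_sqrt zero_le_two]
  norm_num

lemma BellProj_eq_sum_pauliBasis (i : Fin 4) :
    BellProj i = (1 / 4 : ℂ) • ∑ μ, (bellSign i μ : ℂ) • (pauliBasis μ ⊗ₖ pauliBasis μ) := by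
  have conj_invSqrt2 : (starRingEnd ℂ) invSqrt2 = invSqrt2 := conj_ofReal _
  ext ⟨a, b⟩ ⟨a', b'⟩
  fin_cases i <;> fin_cases a <;> fin_cases b <;> fin_cases a' <;> fin_cases b' <;>
    simp [BellProj, bell, bellSign, pauliBasis, pauli, vecMulVec_apply, Fin.sum_univ_four,
      conj_invSqrt2, invSqrt2_mul_self] <;> norm_num

lemma reindex_swapMid_BellProj_kronecker_BellProj (i j : Fin 4) :
    reindex swapMid swapMid (BellProj i ⊗ₖ BellProj j) =
      ∑ t : Fin 4 × Fin 4, ((bellSign i t.1 * bellSign j t.2 / 16 : ℝ) : ℂ) •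
        (pauliString t ⊗ₖ pauliString t) := by
  ext p q
  simp only [BellProj_eq_sum_pauliBasis, reindex_apply, submatrix_apply, kroneckerMap_apply,
    pauliString, swapMid, Equiv.coe_fn_symm_mk,
    Matrix.smul_apply, Matrix.sum_apply, smul_eq_mul, mul_mul_mul_comm (1 / 4 : ℂ) _ (1 / 4 : ℂ),
    Fintype.sum_mul_sum, Fintype.sum_prod_type]
  simp only [Finset.mul_sum]
  refine Fintype.sum_congr _ _ fun μ => Fintype.sum_congr _ _ fun ν => ?_
  push_cast
  ring

/-- The coefficient of `P_t ⊗ P_t` in `∑ i j, W i j • Π_i ⊗ Π_j` once the qubits are regrouped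
into the two parties. -/
def pauliCoeff (W : Matrix (Fin 4) (Fin 4) ℝ) (t : Fin 4 × Fin 4) : ℝ :=
  ∑ i, ∑ j, W i j * (bellSign i t.1 * bellSign j t.2 / 16)

lemma reindex_swapMid_sum_BellProj (W : Matrix (Fin 4) (Fin 4) ℝ) :
    reindex swapMid swapMid (∑ i, ∑ j, (W i j : ℂ) • (BellProj i ⊗ₖ BellProj j)) =
      ∑ t, (pauliCoeff W t : ℂ) • (pauliString t ⊗ₖ pauliString t) := by
  calc reindex swapMid swapMid (∑ i, ∑ j, (W i j : ℂ) • (BellProj i ⊗ₖ BellProj j))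
      = ∑ i, ∑ j, (W i j : ℂ) • reindex swapMid swapMid (BellProj i ⊗ₖ BellProj j) := by
        simp only [← coe_reindexLinearEquiv ℂ ℂ, map_sum, map_smul]
    _ = ∑ i, ∑ j, ∑ t : Fin 4 × Fin 4,
          ((W i j * (bellSign i t.1 * bellSign j t.2 / 16) : ℝ) : ℂ) •
            (pauliString t ⊗ₖ pauliString t) := by
        simp only [reindex_swapMid_BellProj_kronecker_BellProj, Finset.smul_sum, smul_smul,
          ← ofReal_mul]
    _ = ∑ t, (pauliCoeff W t : ℂ) • (pauliString t ⊗ₖ pauliString t) := by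
        simp only [pauliCoeff, ofReal_sum, Finset.sum_smul]
        rw [Finset.sum_comm (s := (Finset.univ : Finset (Fin 4 × Fin 4)))]
        exact Fintype.sum_congr _ _ fun i => Finset.sum_comm

lemma trace_reindex_mul_reindex {d e : Type*} [Fintype d] [Fintype e] (f : d ≃ e)
    (A B : Matrix d d ℂ) : (reindex f f A * reindex f f B).trace = (A * B).trace := by
  rw [reindex_apply, reindex_apply, submatrix_mul_equiv]
  exact f.symm.sum_comp fun i => (A * B) i i

lemma trace_sum_BellProj_mul_nonneg {W : Matrix (Fin 4) (Fin 4) ℝ}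
    (h₀ : 0 ≤ pauliCoeff W (0, 0)) (hopf : ∀ t ∈ hopfStrings, pauliCoeff W t = 0)
    (gen : ∀ t ∈ generatorStrings, |pauliCoeff W t| ≤ pauliCoeff W (0, 0) / 2)
    {ρ : M16} (hρ : SepAB ρ) :
    0 ≤ ((∑ i, ∑ j, (W i j : ℂ) • (BellProj i ⊗ₖ BellProj j)) * ρ).trace := by
  obtain ⟨n, x, y, hxy⟩ := hρ
  have trace_eq : ((∑ i, ∑ j, (W i j : ℂ) • (BellProj i ⊗ₖ BellProj j)) * ρ).trace =
      (∑ k, ∑ t, pauliCoeff W t *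
        (expectation (pauliString t) (x k) * expectation (pauliString t) (y k)) : ℝ) := by
    rw [← trace_reindex_mul_reindex swapMid, hxy, reindex_swapMid_sum_BellProj, Finset.mul_sum,
      trace_sum]
    simp only [Finset.sum_mul, trace_sum, smul_mul, trace_smul, smul_eq_mul,
      trace_kronecker_mul_pureMat (isHermitian_pauliString _) (isHermitian_pauliString _),
      ofReal_sum, ofReal_mul]
  rw [trace_eq]
  exact_mod_cast Finset.sum_nonneg fun k _ =>
    sum_mul_expectation_pauliString_nonneg h₀ hopf gen (x k) (y k)

lemma pauliCoeff_W3 (μ ν : Fin 4) : pauliCoeff W3 (μ, ν) =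
    !![1, 1/2, 0, 0; 1/2, 0, 1/2, 1/2; 1/2, 0, -1/2, -1/2; 1/2, 0, -1/2, 1/2] μ ν := by
  fin_cases μ <;> fin_cases ν <;>
    simp [pauliCoeff, bellSign, W3, Fin.sum_univ_four] <;> norm_num

/-- STATEMENT: `Z_{w,3} = Σ_{ij} [W3]_{ij} Π_i⊗Π_j` is an entanglement witness for
the partition A = (A',A''), B = (B',B''): `tr(Z_{w,3} ρ) ≥ 0` for every matrix `ρ`
separable across this partition. -/
theorem stmt7 (ρ : M16) (hρ : SepAB ρ) :
    0 ≤ ((∑ i, ∑ j, (W3 i j : ℂ) • (BellProj i ⊗ₖ BellProj j)) * ρ).trace := by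
  have hopf : ∀ t ∈ hopfStrings, pauliCoeff W3 t = 0 := by
    simp [hopfStrings, pauliCoeff_W3]
  have gen : ∀ t ∈ generatorStrings, |pauliCoeff W3 t| ≤ pauliCoeff W3 (0, 0) / 2 := by
    rintro ⟨μ, ν⟩ ht
    rw [pauliCoeff_W3, pauliCoeff_W3]
    fin_cases μ <;> fin_cases ν <;> revert ht <;> norm_num [generatorStrings, hopfStrings]
  exact trace_sum_BellProj_mul_nonneg (by norm_num [pauliCoeff_W3]) hopf gen hρ

end Paper
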